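/- Let α be a type and let A, B be lists over α of equal length. Then for every k ≥ 2, the length of S_{A,B}(k) satisfies |S(k)| = |S(a(k))| + |S(a(k−1))|. -/

import Mathlib

/-- Stern's diatomic sequence. -/
def stern : ℕ → ℕ
  | 0 => 0
  | 1 => 1
  | n + 2 =>
    if (n + 2) % 2 = 0 then stern ((n + 2) / 2)
    else stern ((n + 2) / 2) + stern ((n + 2) / 2 + 1)
decreasing_by all_goals omega

/-- OEIS A003602: a(1)=1, a(2n)=a(n), a(2n+1)=n+1. (a(0)=0 as junk value.) -/
def aseq : ℕ → ℕ
  | 0 => 0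
  | 1 => 1
  | n + 2 =>
    if (n + 2) % 2 = 0 then aseq ((n + 2) / 2)
    else (n + 2) / 2 + 1
decreasing_by all_goals omega

-- the modified sequence `a*`: zero at powers of two.
open Classical in
noncomputable def aStar (j : ℕ) : ℕ :=
  if ∃ k, j = 2 ^ k then 0 else aseq j

theorem aseq_le (n : ℕ) : aseq n ≤ n := by
  induction n using Nat.strong_induction_on with
  | _ n ih =>
    match n with
    | 0 => simp [aseq]
    | 1 => simp [aseq]
    | m + 2 =>
      rw [aseq]
      split
      · exact le_trans (ih ((m + 2) / 2) (by omega)) (by omega)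
      · omega

theorem aStar_le (j : ℕ) : aStar j ≤ j := by
  unfold aStar
  split
  · omega
  · exact aseq_le j

/-- The Markov-type sequence `S_{A,B}(n)`. -/
noncomputable def mseq {α : Type*} (A B : List α) : ℕ → List α
  | 0 => A
  | 1 => B
  | 2 => A ++ B
  | n + 3 =>
    if (n + 3) % 2 = 0 then
      mseq A B ((n + 3) / 2) ++ mseq A B (aseq ((n + 3) / 2))
    else
      mseq A B (aStar ((n + 4) / 2 - 1)) ++ mseq A B ((n + 4) / 2)
decreasing_by
  all_goals first
    | omega
    | exact lt_of_le_of_lt (aseq_le _) (by omega)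
    | exact lt_of_le_of_lt (aStar_le _) (by omega)

theorem aseq_even (n : ℕ) (hn : 1 ≤ n) : aseq (2 * n) = aseq n := by
  obtain ⟨m, rfl⟩ : ∃ m, n = m + 1 := ⟨n - 1, by omega⟩
  have e : 2 * (m + 1) = 2 * m + 2 := by ring
  rw [e, aseq, if_pos (by omega)]
  congr 1
  omega

theorem aseq_odd (n : ℕ) : aseq (2 * n + 1) = n + 1 := by
  rcases n with _ | m
  · simp [aseq]
  · have e : 2 * (m + 1) + 1 = (2 * m + 1) + 2 := by ring
    rw [e, aseq, if_neg (by omega)]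
    omega

theorem aseq_pow (k : ℕ) : aseq (2 ^ k) = 1 := by
  induction k with
  | zero => simp [aseq]
  | succ k ih => rw [pow_succ', aseq_even _ Nat.one_le_two_pow, ih]

theorem mseq_aStar_length {α : Type*} (A B : List α) (h : A.length = B.length) (j : ℕ) :
    (mseq A B (aStar j)).length = (mseq A B (aseq j)).length := by
  unfold aStar
  split
  · rename_i hj
    obtain ⟨k, rfl⟩ := hj
    rw [aseq_pow, mseq, mseq, h]
  · rfl

/-- if `A` and `B` have equal length then for every `k ≥ 2`,
`|S(k)| = |S(a(k))| + |S(a(k−1))|`. -/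
theorem stmt5 {α : Type*} (A B : List α) (h : A.length = B.length) (k : ℕ) (hk : 2 ≤ k) :
    (mseq A B k).length = (mseq A B (aseq k)).length + (mseq A B (aseq (k - 1))).length := by
  rcases Nat.lt_or_ge k 3 with h3 | h3
  · obtain rfl : k = 2 := by omega
    have h2 : aseq 2 = 1 := aseq_pow 1
    have h1 : aseq (2 - 1) = 1 := aseq_pow 0
    rw [h2, h1, mseq, mseq, List.length_append, h]
  · obtain ⟨n, rfl⟩ : ∃ n, k = n + 3 := ⟨k - 3, by omega⟩
    rw [mseq]
    split
    · obtain ⟨j, hj⟩ : ∃ j, n + 3 = 2 * (j + 1) := ⟨(n + 3) / 2 - 1, by omega⟩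
      have e1 : (n + 3) / 2 = j + 1 := by omega
      have e2 : n + 3 - 1 = 2 * j + 1 := by omega
      rw [e1, e2, hj, aseq_even _ (by omega), aseq_odd, List.length_append, add_comm]
    · obtain ⟨j, hj⟩ : ∃ j, n + 3 = 2 * j + 1 := ⟨(n + 3) / 2, by omega⟩
      have e1 : (n + 4) / 2 = j + 1 := by omega
      have e2 : n + 3 - 1 = 2 * j := by omega
      rw [e1, e2, hj, aseq_even _ (by omega), aseq_odd, List.length_append, add_comm,
        Nat.add_sub_cancel, mseq_aStar_length A B h]
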